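/- arXiv:1611.08422 — 7 statements merged into one kernel-verified Lean document; each statement's English description precedes it below -/
import Mathlib

section
/- For the vectorial Boolean negation f₀ : 𝔹^N → 𝔹^N, (x_1,…,x_N) ↦ (¬x_1,…,¬x_N), the map G_{f₀} is chaotic in the sense of Devaney on the metric space (X,d): it is regular (its periodic points are dense in X) and topologically transitive. -/
/-!
With the negation, one step of `Gf` on `(S, E)` shifts `S` and flips the bit of `E` numbered `S 0`.
Two points with the same Boolean part whose sequences agree on a long prefix are close
(`exists_prefix_dX_lt`), so only finitely many letters of a sequence are constrained.

* Periodic points are dense: repeat a prefix of length `n` forever. Running through `n` letters acts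
  on the Boolean part as the exclusive or with a vector depending only on the sequence
  (`exists_iterate_eq_xor`), so after `2 * n` steps the Boolean part is back as well.
* Transitivity: after the prescribed prefix (`exists_cons_prefix`), insert letters flipping exactly
  the bits that differ from those of the target (`exists_reach`), then continue with the target
  sequence. The orbit then hits the target exactly.
-/

/-- Hamming distance on 𝔹^N : d_e(E,E') = Σ_k δ(E_k, E'_k), δ the discrete Boolean metric. -/
noncomputable def dE (N : ℕ) (E E' : Fin N → Bool) : ℝ :=
  ∑ k : Fin N, if E k = E' k then 0 else 1

/-- d_s(S,S') = (9/N) Σ_{k=1}^∞ |S^k − S'^k| / 10^k (sequences indexed from 0 in Lean). -/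
noncomputable def dS (N : ℕ) (S S' : ℕ → Fin N) : ℝ :=
  (9 / N) * ∑' k : ℕ, |((S k : ℕ) : ℝ) - ((S' k : ℕ) : ℝ)| / 10 ^ (k + 1)

/-- d((S,E),(S',E')) = d_e(E,E') + d_s(S,S') on X = ⟦1,N⟧^ℕ × 𝔹^N.
    (Points of X are stored as pairs (S, E).) -/
noncomputable def dX (N : ℕ) (X Y : (ℕ → Fin N) × (Fin N → Bool)) : ℝ :=
  dE N X.2 Y.2 + dS N X.1 Y.1

/-- F_f(k,E) : the k-th component is replaced by f(E)_k, the others are unchanged. -/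
def Ff (N : ℕ) (f : (Fin N → Bool) → Fin N → Bool) (k : Fin N) (E : Fin N → Bool) :
    Fin N → Bool :=
  fun j => if j = k then f E j else E j

/-- G_f(S,E) = (σ(S), F_f(S^0,E)), where σ is the shift. -/
def Gf (N : ℕ) (f : (Fin N → Bool) → Fin N → Bool)
    (X : (ℕ → Fin N) × (Fin N → Bool)) : (ℕ → Fin N) × (Fin N → Bool) :=
  (fun n => X.1 (n + 1), Ff N f (X.1 0) X.2)

/-- The vectorial Boolean negation. -/
def negAll (N : ℕ) : (Fin N → Bool) → Fin N → Bool := fun x i => !(x i)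

/-- Agreement on a long enough prefix forces closeness, with a length depending on `ε` only.
The inequality `2 ^ n * 5 ^ k ≤ 10 ^ (k + 1)` for `n ≤ k` bounds the whole series, zero terms
included, by one geometric series whose sum is a multiple of `(1 / 2) ^ n`. -/
lemma exists_prefix_dX_lt (N : ℕ) (hN : 1 ≤ N) (ε : ℝ) (hε : 0 < ε) :
    ∃ n > 0, ∀ (S S' : ℕ → Fin N) (E : Fin N → Bool), (∀ k < n, S' k = S k) →
      dX N (S, E) (S', E) < ε := by
  -- The estimate below gives distance at most `45 / 4 * (1 / 2) ^ n`, and `45 / 4 < 12`.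
  obtain ⟨n, hn⟩ := exists_pow_lt_of_lt_one (show 0 < ε / 12 by positivity)
    (show (1 / 2 : ℝ) < 1 by norm_num)
  refine ⟨n + 1, n.succ_pos, fun S S' E h => ?_⟩
  have hN' : (0 : ℝ) < N := by exact_mod_cast hN
  have hg : HasSum (fun k : ℕ => (N * (1 / 2 : ℝ) ^ n) * (1 / 5 : ℝ) ^ k)
      ((N * (1 / 2 : ℝ) ^ n) * (1 - 1 / 5)⁻¹) :=
    (hasSum_geometric_of_lt_one (by norm_num) (by norm_num)).mul_left _
  have hle : ∀ k : ℕ, |((S k : ℕ) : ℝ) - ((S' k : ℕ) : ℝ)| / 10 ^ (k + 1) ≤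
      (N * (1 / 2 : ℝ) ^ n) * (1 / 5 : ℝ) ^ k := by
    intro k
    rcases lt_or_ge k (n + 1) with hk | hk
    · rw [h k hk, sub_self, abs_zero, zero_div]
      positivity
    · have h1 : |((S k : ℕ) : ℝ) - ((S' k : ℕ) : ℝ)| ≤ N := by
        have a : ((S k : ℕ) : ℝ) ≤ N := by exact_mod_cast (S k).2.le
        have b : ((S' k : ℕ) : ℝ) ≤ N := by exact_mod_cast (S' k).2.le
        have a' : (0 : ℝ) ≤ ((S k : ℕ) : ℝ) := Nat.cast_nonneg _
        have b' : (0 : ℝ) ≤ ((S' k : ℕ) : ℝ) := Nat.cast_nonneg _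
        rw [abs_le]
        constructor <;> linarith
      have h2 : (2 : ℝ) ^ n * 5 ^ k ≤ 10 ^ (k + 1) := by
        calc (2 : ℝ) ^ n * 5 ^ k ≤ 2 ^ k * 5 ^ k := by
              gcongr
              · norm_num
              · omega
          _ = 10 ^ k := by rw [← mul_pow]; norm_num
          _ ≤ 10 ^ (k + 1) := by
              gcongr
              · norm_num
              · omega
      calc _ ≤ (N : ℝ) / (2 ^ n * 5 ^ k) := by gcongr
        _ = _ := by
          rw [div_pow, div_pow, one_pow, one_pow]
          field_simp
  have hs := Summable.of_nonneg_of_le (fun k => by positivity) hle hg.summable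
  have ht := hs.tsum_le_tsum hle hg.summable
  rw [hg.tsum_eq] at ht
  have hE : dE N E E = 0 := by simp [dE]
  unfold dX dS
  simp only [hE, zero_add]
  calc _ ≤ (9 / (N : ℝ)) * ((N * (1 / 2 : ℝ) ^ n) * (1 - 1 / 5)⁻¹) := by gcongr
    _ = 45 / 4 * (1 / 2 : ℝ) ^ n := by
      field_simp
      norm_num
    _ < ε := by
      have : (0 : ℝ) < (1 / 2) ^ n := by positivity
      linarith

lemma Ff_negAll (N : ℕ) (a : Fin N) (E : Fin N → Bool) :
    Ff N (negAll N) a E = fun j => xor (E j) (decide (j = a)) := by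
  funext j
  by_cases h : j = a <;> simp [Ff, negAll, h]

/-- The first `n` letters of `S` flip a set of bits `c` that does not depend on the Boolean part. -/
lemma exists_iterate_eq_xor (N n : ℕ) (S : ℕ → Fin N) :
    ∃ c : Fin N → Bool, ∀ E, (Gf N (negAll N))^[n] (S, E) =
      (fun m => S (m + n), fun j => xor (E j) (c j)) := by
  induction n generalizing S with
  | zero => exact ⟨fun _ => false, fun E => by simp⟩
  | succ n ih =>
    obtain ⟨c, hc⟩ := ih (fun m => S (m + 1))
    refine ⟨fun j => xor (decide (j = S 0)) (c j), fun E => ?_⟩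
    rw [Function.iterate_succ_apply]
    have : Gf N (negAll N) (S, E) = (fun m => S (m + 1), Ff N (negAll N) (S 0) E) := rfl
    rw [this, hc, Ff_negAll]
    simp only [Bool.xor_assoc]
    rfl

/-- Putting the letter `a` in front of `S` adds one initial flip of the bit `a`. -/
lemma iterate_succ_cons (N n : ℕ) (a : Fin N) (S : ℕ → Fin N) (E : Fin N → Bool) :
    (Gf N (negAll N))^[n + 1] ((fun k => Nat.casesOn k a S : ℕ → Fin N), E) =
      (Gf N (negAll N))^[n] (S, Ff N (negAll N) a E) := rfl

/-- The first `n` letters of `S₀` can be followed by an arbitrary sequence `S`, and the Boolean part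
`E'` reached after reading them is independent of `S`. -/
lemma exists_cons_prefix (N n : ℕ) (S₀ : ℕ → Fin N) (E : Fin N → Bool) :
    ∃ E' : Fin N → Bool, ∀ S : ℕ → Fin N, ∃ S' : ℕ → Fin N, (∀ k < n, S' k = S₀ k) ∧
      (Gf N (negAll N))^[n] (S', E) = (S, E') := by
  induction n generalizing S₀ E with
  | zero => exact ⟨E, fun S => ⟨S, by simp, rfl⟩⟩
  | succ n ih =>
    obtain ⟨E', h⟩ := ih (fun m => S₀ (m + 1)) (Ff N (negAll N) (S₀ 0) E)
    refine ⟨E', fun S => ?_⟩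
    obtain ⟨S', h1, h2⟩ := h S
    refine ⟨fun m => Nat.casesOn m (S₀ 0) S', fun k hk => ?_,
      (iterate_succ_cons N n (S₀ 0) S' E).trans h2⟩
    cases k with
    | zero => rfl
    | succ k => exact h1 k (by omega)

/-- Every Boolean vector `E` can be steered to every `E'`, with any prescribed continuation `S` of
the driving sequence. The finset `T` contains the coordinates still to be corrected. -/
lemma exists_reach (N : ℕ) (S : ℕ → Fin N) (E' : Fin N → Bool) (T : Finset (Fin N))
    (E : Fin N → Bool) (hE : ∀ j ∉ T, E j = E' j) :
    ∃ (m : ℕ) (S' : ℕ → Fin N), (Gf N (negAll N))^[m] (S', E) = (S, E') := by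
  induction T using Finset.induction_on generalizing E with
  | empty =>
    obtain rfl : E = E' := funext fun j => hE j (by simp)
    exact ⟨0, S, rfl⟩
  | insert a T _ ih =>
    by_cases ha : E a = E' a
    · refine ih E fun j hj => ?_
      by_cases hja : j = a
      · rw [hja, ha]
      · exact hE j (by simp [hj, hja])
    · obtain ⟨m, S', h⟩ := ih (Ff N (negAll N) a E) fun j hj => by
        by_cases hja : j = a
        · subst hja
          simpa [Ff, negAll, Bool.eq_not] using ha
        · simpa [Ff, hja] using hE j (by simp [hj, hja])
      exact ⟨m + 1, fun k => Nat.casesOn k a S', (iterate_succ_cons N m a S' E).trans h⟩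

/- STATEMENT 2: for the vectorial Boolean negation f₀, the map G_{f₀} is chaotic in the
   sense of Devaney on the metric space (X,d): it is regular (periodic points are dense,
   stated with the metric d) and topologically transitive (stated via open balls of d,
   which form a base of the metric topology). -/
theorem Gf_neg_chaotic (N : ℕ) (hN : 1 ≤ N) :
    -- regularity: every point is approximated by periodic points of G_{f₀}
    (∀ X : (ℕ → Fin N) × (Fin N → Bool), ∀ ε > (0 : ℝ),
      ∃ P : (ℕ → Fin N) × (Fin N → Bool),
        dX N X P < ε ∧ ∃ n > 0, (Gf N (negAll N))^[n] P = P) ∧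
    -- topological transitivity, expressed on the base of open d-balls
    (∀ X Y : (ℕ → Fin N) × (Fin N → Bool), ∀ ε₁ > (0 : ℝ), ∀ ε₂ > (0 : ℝ),
      ∃ Z : (ℕ → Fin N) × (Fin N → Bool),
        dX N X Z < ε₁ ∧ ∃ k > 0, dX N ((Gf N (negAll N))^[k] Z) Y < ε₂) := by
  constructor
  · rintro ⟨S, E⟩ ε hε
    obtain ⟨n, hn, h⟩ := exists_prefix_dX_lt N hN ε hε
    refine ⟨(fun m => S (m % n), E), h _ _ _ fun k hk => by rw [Nat.mod_eq_of_lt hk],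
      n + n, by omega, ?_⟩
    obtain ⟨c, hc⟩ := exists_iterate_eq_xor N n (fun m => S (m % n))
    simp only [Nat.add_mod_right] at hc
    rw [Function.iterate_add_apply, hc, hc]
    simp
  · rintro ⟨S, E⟩ ⟨S₂, E₂⟩ ε₁ hε₁ ε₂ hε₂
    obtain ⟨n, hn, h⟩ := exists_prefix_dX_lt N hN ε₁ hε₁
    obtain ⟨E', h'⟩ := exists_cons_prefix N n S E
    obtain ⟨m, S₁, hm⟩ := exists_reach N S₂ E₂ Finset.univ E' (by simp)
    obtain ⟨Z, hZ, hZn⟩ := h' S₁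
    refine ⟨(Z, E), h _ _ _ hZ, m + n, by omega, ?_⟩
    rw [Function.iterate_add_apply, hZn, hm]
    simpa [dX, dE, dS] using hε₂
end

section
/- Let f : 𝔹^N → 𝔹^N. If the asynchronous iteration graph Γ(f) is strongly connected, then G_f is topologically transitive on the metric space (X,d). -/
/-- The asynchronous iteration graph Γ(f) is strongly connected: every vertex of 𝔹^N is
    reachable from every other along arcs x → F_f(i,x). -/
def stronglyConnected (N : ℕ) (f : (Fin N → Bool) → Fin N → Bool) : Prop :=
  ∀ x y : Fin N → Bool, Relation.ReflTransGen (fun a b => ∃ i : Fin N, Ff N f i a = b) x y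

/-- The strategy with first term `i`, followed by `S`. -/
def prepend {N : ℕ} (i : Fin N) (S : ℕ → Fin N) : ℕ → Fin N
  | 0 => i
  | n + 1 => S n

lemma Gf_prepend (N : ℕ) (f : (Fin N → Bool) → Fin N → Bool) (i : Fin N) (S : ℕ → Fin N)
    (E : Fin N → Bool) : Gf N f (prepend i S, E) = (S, Ff N f i E) := rfl

/-- A path of `Γ(f)` from `x` to `y` can be followed by a strategy with any prescribed tail. -/
lemma exists_strategy_of_reachable (N : ℕ) (f : (Fin N → Bool) → Fin N → Bool)
    {x y : Fin N → Bool}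
    (h : Relation.ReflTransGen (fun a b => ∃ i : Fin N, Ff N f i a = b) x y) (T : ℕ → Fin N) :
    ∃ (S : ℕ → Fin N) (k : ℕ), (Gf N f)^[k] (S, x) = (T, y) := by
  induction h using Relation.ReflTransGen.head_induction_on with
  | refl => exact ⟨T, 0, rfl⟩
  | head hac _ ih =>
    obtain ⟨i, rfl⟩ := hac
    obtain ⟨S, k, hS⟩ := ih
    exact ⟨prepend i S, k + 1, by rw [Function.iterate_succ_apply, Gf_prepend, hS]⟩

/-- The first `n` terms of `S` determine the state after `n` steps; the tail is free. -/
lemma exists_splice (N : ℕ) (f : (Fin N → Bool) → Fin N → Bool) (n : ℕ) (S : ℕ → Fin N)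
    (E : Fin N → Bool) : ∃ E' : Fin N → Bool, ∀ T : ℕ → Fin N,
      ∃ S' : ℕ → Fin N, (∀ k < n, S k = S' k) ∧ (Gf N f)^[n] (S', E) = (T, E') := by
  induction n generalizing S E with
  | zero => exact ⟨E, fun T => ⟨T, by simp, rfl⟩⟩
  | succ n ih =>
    obtain ⟨E', h⟩ := ih (fun k => S (k + 1)) (Ff N f (S 0) E)
    refine ⟨E', fun T => ?_⟩
    obtain ⟨S', hS', hit⟩ := h T
    refine ⟨prepend (S 0) S', ?_, by rw [Function.iterate_succ_apply, Gf_prepend, hit]⟩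
    rintro (_ | k) hk
    · rfl
    · exact hS' k (by omega)

lemma dS_le_of_agree (N : ℕ) (hN : 1 ≤ N) (n : ℕ) (S S' : ℕ → Fin N)
    (h : ∀ k < n, S k = S' k) : dS N S S' ≤ (1 / 10) ^ n := by
  have hN0 : (0 : ℝ) < N := by exact_mod_cast hN
  set g : ℕ → ℝ := fun k => |((S k : ℕ) : ℝ) - ((S' k : ℕ) : ℝ)| / 10 ^ (k + 1) with hg
  have hgeo : Summable fun k : ℕ => (1 / 10 : ℝ) ^ k :=
    summable_geometric_of_lt_one (by norm_num) (by norm_num)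
  have hle : ∀ k, g k ≤ N / 10 * (1 / 10) ^ k := by
    intro k
    have h1 : ((S k : ℕ) : ℝ) < N := by exact_mod_cast (S k).2
    have h2 : ((S' k : ℕ) : ℝ) < N := by exact_mod_cast (S' k).2
    have h3 : (0 : ℝ) ≤ ((S k : ℕ) : ℝ) := Nat.cast_nonneg _
    have h4 : (0 : ℝ) ≤ ((S' k : ℕ) : ℝ) := Nat.cast_nonneg _
    have h5 : |((S k : ℕ) : ℝ) - ((S' k : ℕ) : ℝ)| ≤ N :=
      abs_le.2 ⟨by linarith, by linarith⟩
    calc g k ≤ N / 10 ^ (k + 1) := by simp only [hg]; gcongr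
      _ = N / 10 * (1 / 10) ^ k := by rw [pow_succ, one_div, inv_pow]; field_simp
  have hgs : Summable g :=
    Summable.of_nonneg_of_le (fun k => by positivity) hle (hgeo.mul_left _)
  have hhead : ∑ k ∈ Finset.range n, g k = 0 :=
    Finset.sum_eq_zero fun k hk => by simp [hg, h k (Finset.mem_range.1 hk)]
  have htail : ∑' k, g (k + n) ≤ ∑' k : ℕ, N / 10 * (1 / 10) ^ n * (1 / 10 : ℝ) ^ k := by
    refine Summable.tsum_le_tsum (fun k => (hle (k + n)).trans_eq ?_)
      ((summable_nat_add_iff n).2 hgs) (hgeo.mul_left _)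
    ring
  rw [tsum_mul_left, tsum_geometric_of_lt_one (by norm_num) (by norm_num)] at htail
  have hsum : ∑' k, g k ≤ N / 10 * (1 / 10) ^ n * (1 - 1 / 10)⁻¹ := by
    rw [← hgs.sum_add_tsum_nat_add n, hhead, zero_add]
    exact htail
  calc dS N S S' = 9 / N * ∑' k, g k := rfl
    _ ≤ 9 / N * (N / 10 * (1 / 10) ^ n * (1 - 1 / 10)⁻¹) := by gcongr
    _ = (1 / 10) ^ n := by field_simp; norm_num

/- STATEMENT 3: if Γ(f) is strongly connected then G_f is topologically transitive on the
   metric space (X,d) (transitivity expressed on the base of open d-balls). -/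
theorem Gf_transitive_of_stronglyConnected (N : ℕ) (hN : 1 ≤ N)
    (f : (Fin N → Bool) → Fin N → Bool) (hf : stronglyConnected N f) :
    ∀ X Y : (ℕ → Fin N) × (Fin N → Bool), ∀ ε₁ > (0 : ℝ), ∀ ε₂ > (0 : ℝ),
      ∃ Z : (ℕ → Fin N) × (Fin N → Bool),
        dX N X Z < ε₁ ∧ ∃ k > 0, dX N ((Gf N f)^[k] Z) Y < ε₂ := by
  rintro ⟨S, E⟩ ⟨T, B⟩ ε₁ hε₁ ε₂ hε₂
  obtain ⟨n, hn⟩ := exists_pow_lt_of_lt_one hε₁ (by norm_num : (1 / 10 : ℝ) < 1)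
  -- Keeping `n + 1` terms instead of `n` makes the number of iterations positive.
  obtain ⟨E', hE'⟩ := exists_splice N f (n + 1) S E
  obtain ⟨R, k, hR⟩ := exists_strategy_of_reachable N f (hf E' B) T
  obtain ⟨S', hS', hit⟩ := hE' R
  refine ⟨(S', E), ?_, k + (n + 1), by omega, ?_⟩
  · have := dS_le_of_agree N hN n S S' fun k hk => hS' k (by omega)
    simp only [dX, dE, if_true, Finset.sum_const_zero, zero_add]
    linarith
  · rw [Function.iterate_add_apply, hit, hR]
    simpa [dX, dE, dS] using hε₂
end

section
/- Let f : 𝔹^N → 𝔹^N. If G_f is chaotic in the sense of Devaney on the metric space (X,d), then the asynchronous iteration graph Γ(f) is strongly connected. -/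
theorem snd_eq_of_dX_lt_one {N : ℕ} {X Y : (ℕ → Fin N) × (Fin N → Bool)}
    (h : dX N X Y < 1) : X.2 = Y.2 := by
  have hS : 0 ≤ dS N X.1 Y.1 :=
    mul_nonneg (by positivity) (tsum_nonneg fun k => by positivity)
  by_contra hne
  obtain ⟨k, hk⟩ := Function.ne_iff.mp hne
  have hE : 1 ≤ dE N X.2 Y.2 := by
    have := Finset.single_le_sum (f := fun k : Fin N => if X.2 k = Y.2 k then (0 : ℝ) else 1)
      (fun i _ => by split_ifs <;> norm_num) (Finset.mem_univ k)
    simpa [hk, dE] using this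
  unfold dX at h
  linarith

theorem reflTransGen_iterate_Gf {N : ℕ} (f : (Fin N → Bool) → Fin N → Bool)
    (Z : (ℕ → Fin N) × (Fin N → Bool)) (n : ℕ) :
    Relation.ReflTransGen (fun a b => ∃ i : Fin N, Ff N f i a = b) Z.2 ((Gf N f)^[n] Z).2 := by
  induction n with
  | zero => exact .refl
  | succ n ih =>
    rw [Function.iterate_succ_apply']
    exact ih.tail ⟨_, rfl⟩

/- STATEMENT 5: if G_f is chaotic in the sense of Devaney on (X,d) (regular and
   topologically transitive, both expressed with the metric d), then Γ(f) is strongly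
   connected. -/
theorem stronglyConnected_of_Gf_chaotic (N : ℕ) (hN : 1 ≤ N)
    (f : (Fin N → Bool) → Fin N → Bool)
    (hreg : ∀ X : (ℕ → Fin N) × (Fin N → Bool), ∀ ε > (0 : ℝ),
      ∃ P : (ℕ → Fin N) × (Fin N → Bool),
        dX N X P < ε ∧ ∃ n > 0, (Gf N f)^[n] P = P)
    (htrans : ∀ X Y : (ℕ → Fin N) × (Fin N → Bool), ∀ ε₁ > (0 : ℝ), ∀ ε₂ > (0 : ℝ),
      ∃ Z : (ℕ → Fin N) × (Fin N → Bool),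
        dX N X Z < ε₁ ∧ ∃ k > 0, dX N ((Gf N f)^[k] Z) Y < ε₂) :
    stronglyConnected N f := by
  intro x y
  -- Any strategy will do; `hN` provides one by making `Fin N` nonempty.
  let S : ℕ → Fin N := fun _ => ⟨0, hN⟩
  obtain ⟨Z, hZ, k, -, hk⟩ := htrans (S, x) (S, y) 1 one_pos 1 one_pos
  have hx : x = Z.2 := snd_eq_of_dX_lt_one hZ
  have hy : ((Gf N f)^[k] Z).2 = y := snd_eq_of_dX_lt_one hk
  rw [hx, ← hy]
  exact reflTransGen_iterate_Gf f Z k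
end

section
/- Let (Y,ρ) be a metric space with infinitely many points and g : Y → Y a continuous map that is chaotic in the sense of Devaney (regular and topologically transitive). Then g has sensitive dependence on initial conditions: there exists δ > 0 such that for any y ∈ Y and any neighborhood V of y, there exist z ∈ V and n > 0 with ρ(g^n(y), g^n(z)) > δ. -/
/-!
Two disjoint periodic orbits lie at some distance `r > 0` from each other, so every point `x` is at
distance at least `r / 2` from one of them, say the orbit of `q`. Put `d = r / 8` and let `V` be a
neighbourhood of `x`. Choose a periodic point `p` near `x` in `V`, of period `n`, and by transitivity
a point `y` near `x` in `V` with an iterate `g^k y` that shadows the orbit of `q` for `n` further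
steps. At the first multiple `N` of `n` after `k`, the point `g^N p = p` is near `x` while `g^N y` is
near the orbit of `q`, so `g^N p` and `g^N y` are more than `2 * d` apart, and `g^N x` is more than
`d` from one of them.
-/

/-- The forward orbit of a periodic point is finite. -/
lemma finite_orbit {Y : Type*} {g : Y → Y} {q : Y} {n : ℕ} (hn : 0 < n) (hq : g^[n] q = q) :
    (Set.range fun i : ℕ => g^[i] q).Finite := by
  refine ((Finset.range n).finite_toSet.image fun i => g^[i] q).subset ?_
  rintro _ ⟨i, rfl⟩
  refine ⟨i % n, by simpa using Nat.mod_lt i hn, ?_⟩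
  exact Function.IsPeriodicPt.iterate_mod_apply (f := g) (n := n) hq i

/-- An infinite metric space with dense periodic points has two periodic orbits at positive
distance: the first one is finite, so its complement is open and nonempty, and the orbit of any
periodic point of this complement is disjoint from it. -/
lemma exists_separated_orbits {Y : Type*} [MetricSpace Y] [Infinite Y] {g : Y → Y}
    (hreg : Dense {y : Y | ∃ n > 0, g^[n] y = y}) :
    ∃ q₁ q₂ : Y, ∃ r > (0 : ℝ), ∀ i j : ℕ, r < dist (g^[i] q₁) (g^[j] q₂) := by
  obtain ⟨q₁, n, hn, h₁⟩ := hreg.nonempty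
  have hf₁ := finite_orbit hn h₁
  obtain ⟨q₂, hq₂, m, hm, h₂⟩ :=
    hreg.inter_open_nonempty _ hf₁.isClosed.isOpen_compl hf₁.infinite_compl.nonempty
  have hf₂ := finite_orbit hm h₂
  have hdisj : Disjoint (Set.range fun i : ℕ => g^[i] q₁) (Set.range fun i : ℕ => g^[i] q₂) := by
    rw [Set.disjoint_left]
    rintro _ ⟨i, rfl⟩ ⟨j, hj⟩
    -- Going on from the common point to the next return of `q₂` puts `q₂` on the orbit of `q₁`.
    refine hq₂ ⟨(m * j - j) + i, ?_⟩
    have hle : j ≤ m * j := Nat.le_mul_of_pos_left j hm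
    change g^[(m * j - j) + i] q₁ = q₂
    simp only at hj
    rw [Function.iterate_add_apply, ← hj, ← Function.iterate_add_apply, Nat.sub_add_cancel hle]
    exact Function.IsPeriodicPt.mul_const (f := g) (m := m) h₂ j
  obtain ⟨r, hr, h⟩ := Metric.exists_pos_forall_lt_edist hf₁.isCompact hf₂.isClosed hdisj
  refine ⟨q₁, q₂, r, by exact_mod_cast hr, fun i j => ?_⟩
  have := h _ ⟨i, rfl⟩ _ ⟨j, rfl⟩
  rw [edist_nndist] at this
  exact_mod_cast this

/- STATEMENT 8 (Banks–Brooks–Cairns–Davis–Stacey): on a metric space with infinitely many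
   points, a continuous map that is chaotic in the sense of Devaney (dense periodic points
   and topologically transitive) has sensitive dependence on initial conditions. -/
theorem devaney_chaos_implies_sensitivity
    {Y : Type*} [MetricSpace Y] [Infinite Y] (g : Y → Y) (hg : Continuous g)
    (hreg : Dense {y : Y | ∃ n > 0, g^[n] y = y})
    (htrans : ∀ U V : Set Y, IsOpen U → IsOpen V → U.Nonempty → V.Nonempty →
      ∃ k > 0, (g^[k] '' U ∩ V).Nonempty) :
    ∃ δ > (0 : ℝ), ∀ y : Y, ∀ V ∈ nhds y,
      ∃ z ∈ V, ∃ n > 0, dist (g^[n] y) (g^[n] z) > δ := by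
  obtain ⟨q₁, q₂, r, hr, hsep⟩ := exists_separated_orbits hreg
  refine ⟨r / 8, by positivity, fun x V hV => ?_⟩
  obtain ⟨q, hq⟩ : ∃ q : Y, ∀ i : ℕ, r / 2 ≤ dist x (g^[i] q) := by
    by_contra! hcon
    obtain ⟨i, hi⟩ := hcon q₁
    obtain ⟨j, hj⟩ := hcon q₂
    linarith [hsep i j, dist_triangle_left (g^[i] q₁) (g^[j] q₂) x]
  have hd : 0 < r / 8 := by positivity
  have hUo : IsOpen (interior V ∩ Metric.ball x (r / 8)) := isOpen_interior.inter Metric.isOpen_ball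
  have hxU : x ∈ interior V ∩ Metric.ball x (r / 8) :=
    ⟨mem_interior_iff_mem_nhds.2 hV, Metric.mem_ball_self hd⟩
  obtain ⟨p, ⟨hpV, hpx⟩, n, hn, hp⟩ := hreg.inter_open_nonempty _ hUo ⟨x, hxU⟩
  -- The points whose first `n` iterates stay close to those of `q`.
  have hWo : IsOpen (⋂ i ∈ Finset.range (n + 1), g^[i] ⁻¹' Metric.ball (g^[i] q) (r / 8)) :=
    isOpen_biInter_finset fun i _ => Metric.isOpen_ball.preimage (hg.iterate i)
  obtain ⟨k, -, _, ⟨y, ⟨hyV, -⟩, rfl⟩, hyW⟩ := htrans _ _ hUo hWo ⟨x, hxU⟩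
    ⟨q, Set.mem_iInter₂.2 fun i _ => Metric.mem_ball_self hd⟩
  obtain ⟨N, i, hN, hNk, hin, hNp⟩ :
      ∃ N i : ℕ, 0 < N ∧ N = i + k ∧ i ≤ n ∧ g^[N] p = p := by
    have hdiv := Nat.div_add_mod k n
    have hmod := Nat.mod_lt k hn
    refine ⟨n * (k / n + 1), n - k % n, by positivity, ?_, Nat.sub_le _ _,
      Function.IsPeriodicPt.mul_const (f := g) (m := n) hp _⟩
    rw [mul_add, mul_one]
    omega
  have hy : dist (g^[N] y) (g^[i] q) < r / 8 := by
    have := Set.mem_iInter₂.1 hyW i (Finset.mem_range.2 (by omega))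
    rw [hNk, Function.iterate_add_apply]
    exact this
  rw [Metric.mem_ball] at hpx
  by_cases hc : dist (g^[N] x) (g^[N] p) > r / 8
  · exact ⟨p, interior_subset hpV, N, hN, hc⟩
  · refine ⟨y, interior_subset hyV, N, hN, ?_⟩
    rw [hNp] at hc
    linarith [hq i, dist_triangle4 x p (g^[N] y) (g^[i] q), dist_comm x p,
      dist_triangle_left p (g^[N] y) (g^[N] x)]
end

section
/- Let f : 𝔹^N → 𝔹^N and let 𝒫 = {p_1,…,p_𝗉} ⊂ ℕ* be a nonempty finite set of positive integers. The dynamical system G of the generator CIPRNG_f^2 on 𝒳_{N,𝒫} = 𝔹^N × (⟦1,N⟧^ℕ × 𝒫^ℕ), defined by G(e,(u,v)) = ( F_{f,v^0}(e,(u^0,…,u^{v^0−1})), (σ^{v^0}(u), σ(v)) ), is chaotic in the sense of Devaney (for the product topology, each factor being discrete) if and only if the graph 𝒢_{f,𝒫} is strongly connected. -/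
/-- Iterated update along the first p terms of the strategy u :
    F_{f,p}(e,(u^0,…,u^{p−1})) = F_f(u^{p-1},·) ∘ ⋯ ∘ F_f(u^0,·) (e). -/
def FfMany (N : ℕ) (f : (Fin N → Bool) → Fin N → Bool) :
    ℕ → (ℕ → Fin N) → (Fin N → Bool) → Fin N → Bool
  | 0, _, e => e
  | p + 1, u, e => FfMany N f p (fun n => u (n + 1)) (Ff N f (u 0) e)

/-- F_{f,p} applied along a finite tuple given as a list (first element applied first). -/
def FfList (N : ℕ) (f : (Fin N → Bool) → Fin N → Bool)
    (l : List (Fin N)) (e : Fin N → Bool) : Fin N → Bool :=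
  l.foldl (fun e a => Ff N f a e) e

/-- The state space 𝒳_{N,𝒫} = 𝔹^N × (⟦1,N⟧^ℕ × 𝒫^ℕ) of CIPRNG²_f, with product topology
    (each factor discrete). -/
abbrev X2 (N : ℕ) (P : Finset ℕ) :=
  (Fin N → Bool) × ((ℕ → Fin N) × {v : ℕ → ℕ // ∀ n, v n ∈ P})

/-- The dynamical system of CIPRNG²_f :
    G(e,(u,v)) = (F_{f,v⁰}(e,(u⁰,…,u^{v⁰−1})), (σ^{v⁰}(u), σ(v))). -/
def G2 (N : ℕ) (f : (Fin N → Bool) → Fin N → Bool) (P : Finset ℕ)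
    (X : X2 N P) : X2 N P :=
  (FfMany N f (X.2.2.1 0) X.2.1 X.1,
   (fun n => X.2.1 (n + X.2.2.1 0),
    ⟨fun n => X.2.2.1 (n + 1), fun n => X.2.2.2 (n + 1)⟩))

/-- Strong connectivity of the graph 𝒢_{f,𝒫} : vertices are the elements of 𝔹^N, and there
    is an arc labelled (a_1,…,a_{p_i}) ∈ ⟦1,N⟧^{p_i} (p_i ∈ 𝒫) from x to y iff
    y = F_{f,p_i}(x,(a_1,…,a_{p_i})). -/
def graphStronglyConnected (N : ℕ) (f : (Fin N → Bool) → Fin N → Bool) (P : Finset ℕ) : Prop :=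
  ∀ x y : Fin N → Bool,
    Relation.ReflTransGen
      (fun a b => ∃ l : List (Fin N), l.length ∈ P ∧ FfList N f l a = b) x y

/-- The sequence starting with the list `l` and continuing with the sequence `u`. -/
def app {α : Type*} (l : List α) (u : ℕ → α) : ℕ → α :=
  fun n => if h : n < l.length then l[n] else u (n - l.length)

theorem app_nil {α : Type*} (u : ℕ → α) : app [] u = u := by
  funext n; simp [app]

theorem app_append {α : Type*} (l l' : List α) (u : ℕ → α) :
    app (l ++ l') u = app l (app l' u) := by
  funext n
  simp only [app, List.length_append, List.getElem_append]
  split_ifs <;> first | rfl | omega | (congr 1; omega)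

theorem app_cons_zero {α : Type*} (a : α) (l : List α) (u : ℕ → α) :
    app (a :: l) u 0 = a := by
  simp [app]

theorem app_cons_succ {α : Type*} (a : α) (l : List α) (u : ℕ → α) (n : ℕ) :
    app (a :: l) u (n + 1) = app l u n := by
  simp [app]

theorem app_drop {α : Type*} (l : List α) (u : ℕ → α) :
    (fun n => app l u (n + l.length)) = u := by
  funext n; simp [app]

theorem app_agree {α : Type*} (l : List α) (u u' : ℕ → α) (i : ℕ) (hi : i < l.length) :
    app l u i = app l u' i := by
  simp [app, hi]

theorem app_mem {α : Type*} {l : List α} {u : ℕ → α} {s : α → Prop}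
    (hl : ∀ a ∈ l, s a) (hu : ∀ n, s (u n)) (n : ℕ) : s (app l u n) := by
  unfold app
  split_ifs with h
  · exact hl _ (List.getElem_mem h)
  · exact hu _

theorem app_ofFn {α : Type*} (p : ℕ) (u : ℕ → α) :
    app (List.ofFn fun i : Fin p => u i) (fun n => u (n + p)) = u := by
  funext n
  simp only [app, List.length_ofFn, List.getElem_ofFn]
  split_ifs
  · rfl
  · congr 1; omega

/-- A nonempty list repeated forever is unchanged when the list is put in front of it. -/
theorem exists_cycle {α : Type*} (l : List α) (h : l ≠ []) :
    ∃ u : ℕ → α, app l u = u ∧ ∀ n, u n ∈ l := by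
  have hpos : 0 < l.length := List.length_pos_iff.mpr h
  refine ⟨fun n => l[n % l.length]'(Nat.mod_lt _ hpos), ?_, fun n => List.getElem_mem _⟩
  funext n
  simp only [app]
  split_ifs with hn
  · congr 1; exact (Nat.mod_eq_of_lt hn).symm
  · congr 1; exact (Nat.mod_eq_sub_mod (not_lt.mp hn)).symm

theorem FfMany_app (N : ℕ) (f : (Fin N → Bool) → Fin N → Bool) (l : List (Fin N))
    (u : ℕ → Fin N) (e : Fin N → Bool) : FfMany N f l.length (app l u) e = FfList N f l e := by
  induction l generalizing e with
  | nil => rfl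
  | cons a l ih =>
    simp only [List.length_cons, FfMany, app_cons_succ, app_cons_zero]
    exact ih _

/-- The vertex reached from `e` by following the arcs labelled by the members of `L` in turn. -/
def run (N : ℕ) (f : (Fin N → Bool) → Fin N → Bool) (L : List (List (Fin N)))
    (e : Fin N → Bool) : Fin N → Bool :=
  L.foldl (fun e l => FfList N f l e) e

/-- If `X` starts with the blocks of `L`, then `L.length` steps of `G2` follow these arcs and
remove these blocks. -/
theorem iterate_G2 (N : ℕ) (f : (Fin N → Bool) → Fin N → Bool) (P : Finset ℕ)
    (L : List (List (Fin N))) (u : ℕ → Fin N) (v : {v : ℕ → ℕ // ∀ n, v n ∈ P})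
    (X : X2 N P) (hu : X.2.1 = app L.flatten u) (hv : X.2.2.1 = app (L.map List.length) v.1) :
    (G2 N f P)^[L.length] X = (run N f L X.1, (u, v)) := by
  induction L generalizing X with
  | nil =>
    obtain ⟨e, u', v'⟩ := X
    simp only [List.flatten_nil, List.map_nil, app_nil] at hu hv
    subst hu
    simp [run, Subtype.ext hv]
  | cons l L ih =>
    have h0 : X.2.2.1 0 = l.length := by rw [hv, List.map_cons, app_cons_zero]
    have h1 : X.2.1 = app l (app L.flatten u) := by rw [hu, List.flatten_cons, app_append]
    rw [List.length_cons, Function.iterate_succ_apply, ih]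
    · simp only [G2, h0, h1, FfMany_app]
      rfl
    · simp only [G2, h0, h1, app_drop]
    · funext n
      simp only [G2, hv, List.map_cons, app_cons_succ]

/-- The sequences of any point start with `n` admissible blocks. -/
theorem exists_blocks (N : ℕ) (P : Finset ℕ) (n : ℕ) (u : ℕ → Fin N) (v : ℕ → ℕ)
    (hv : ∀ i, v i ∈ P) :
    ∃ L : List (List (Fin N)), L.length = n ∧ (∀ l ∈ L, l.length ∈ P) ∧
      (∃ u', u = app L.flatten u') ∧ ∃ v', v = app (L.map List.length) v' := by
  induction n generalizing u v with
  | zero => exact ⟨[], rfl, by simp, ⟨u, (app_nil u).symm⟩, ⟨v, (app_nil v).symm⟩⟩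
  | succ n ih =>
    obtain ⟨L, hL, hP, ⟨u', hu'⟩, v', hv'⟩ :=
      ih (fun n => u (n + v 0)) (fun n => v (n + 1)) (fun i => hv _)
    refine ⟨(List.ofFn fun i : Fin (v 0) => u i) :: L, by simp [hL], ?_, ⟨u', ?_⟩, v', ?_⟩
    · intro l hl
      rcases List.mem_cons.mp hl with rfl | hl
      · simpa using hv 0
      · exact hP l hl
    · rw [List.flatten_cons, app_append, ← hu', app_ofFn]
    · funext i
      cases i with
      | zero => simp [app_cons_zero]
      | succ i => rw [List.map_cons, app_cons_succ, ← hv']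

/-- A neighbourhood of `X` contains all points agreeing with `X` on a long enough prefix. -/
theorem exists_agree (N : ℕ) (P : Finset ℕ) (U : Set (X2 N P)) (hU : IsOpen U) (X : X2 N P)
    (hX : X ∈ U) :
    ∃ n > 0, ∀ Y : X2 N P, Y.1 = X.1 → (∀ i < n, Y.2.1 i = X.2.1 i) →
      (∀ i < n, Y.2.2.1 i = X.2.2.1 i) → Y ∈ U := by
  by_contra! h
  choose Y h1 h2 h3 h4 using fun n : ℕ => h (n + 1) n.succ_pos
  have ht : Filter.Tendsto Y Filter.atTop (nhds X) := by
    refine (Prod.tendsto_iff _ _).mpr ⟨?_, (Prod.tendsto_iff _ _).mpr ⟨?_, ?_⟩⟩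
    · exact tendsto_const_nhds.congr fun n => (h1 n).symm
    · refine tendsto_pi_nhds.mpr fun i => tendsto_const_nhds.congr' ?_
      filter_upwards [Filter.eventually_ge_atTop i] with n hn
      exact (h2 n i (by omega)).symm
    · refine tendsto_subtype_rng.mpr (tendsto_pi_nhds.mpr fun i => tendsto_const_nhds.congr' ?_)
      filter_upwards [Filter.eventually_ge_atTop i] with n hn
      exact (h3 n i (by omega)).symm
  obtain ⟨n, hn⟩ := (ht.eventually (hU.mem_nhds hX)).exists
  exact h4 n hn

/-- Every neighbourhood of `X` is determined by a nonempty list of initial blocks of `X`, in the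
sense that it contains all points with the same first component starting with these blocks. -/
theorem exists_blocks_subset (N : ℕ) (P : Finset ℕ) (hpos : ∀ p ∈ P, 0 < p) (U : Set (X2 N P))
    (hU : IsOpen U) (X : X2 N P) (hX : X ∈ U) :
    ∃ L : List (List (Fin N)), L ≠ [] ∧ (∀ l ∈ L, l.length ∈ P) ∧
      ∀ Y : X2 N P, Y.1 = X.1 → (∃ u, Y.2.1 = app L.flatten u) →
        (∃ v, Y.2.2.1 = app (L.map List.length) v) → Y ∈ U := by
  obtain ⟨n, hn, h⟩ := exists_agree N P U hU X hX
  obtain ⟨L, hL, hP, ⟨u, hu⟩, v, hv⟩ := exists_blocks N P n X.2.1 X.2.2.1 X.2.2.2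
  -- `n` blocks cover at least `n` terms of the strategy because no block is empty.
  have hlen : n ≤ L.flatten.length := by
    rw [List.length_flatten, ← hL, ← List.length_map (f := List.length)]
    refine List.length_le_sum_of_one_le _ fun i hi => ?_
    obtain ⟨l, hl, rfl⟩ := List.mem_map.mp hi
    exact hpos _ (hP l hl)
  refine ⟨L, ?_, hP, ?_⟩
  · rintro rfl
    simp at hL
    omega
  · rintro Y hY ⟨u', hu'⟩ ⟨v', hv'⟩
    refine h Y hY (fun i hi => ?_) (fun i hi => ?_)
    · rw [hu, hu']
      exact app_agree _ _ _ _ (hi.trans_le hlen)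
    · rw [hv, hv']
      exact app_agree _ _ _ _ (by simpa [hL] using hi)

theorem exists_path (N : ℕ) (f : (Fin N → Bool) → Fin N → Bool) (P : Finset ℕ)
    (h : graphStronglyConnected N f P) (x y : Fin N → Bool) :
    ∃ L : List (List (Fin N)), (∀ l ∈ L, l.length ∈ P) ∧ run N f L x = y := by
  induction h x y with
  | refl => exact ⟨[], by simp, rfl⟩
  | tail _ hs ih =>
    obtain ⟨L, hL, hr⟩ := ih
    obtain ⟨l, hl, he⟩ := hs
    refine ⟨L ++ [l], ?_, ?_⟩
    · intro l' hl'
      rcases List.mem_append.mp hl' with h' | h'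
      · exact hL _ h'
      · rwa [List.mem_singleton.mp h']
    · rw [← he, ← hr]
      simp [run]

theorem reach_iterate (N : ℕ) (f : (Fin N → Bool) → Fin N → Bool) (P : Finset ℕ) (k : ℕ)
    (X : X2 N P) :
    Relation.ReflTransGen
      (fun a b => ∃ l : List (Fin N), l.length ∈ P ∧ FfList N f l a = b) X.1
      ((G2 N f P)^[k] X).1 := by
  induction k generalizing X with
  | zero => exact .refl
  | succ k ih =>
    rw [Function.iterate_succ_apply]
    refine .head ⟨List.ofFn fun i : Fin (X.2.2.1 0) => X.2.1 i, ?_, ?_⟩ (ih _)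
    · simpa using X.2.2.2 0
    · have h := FfMany_app N f (List.ofFn fun i : Fin (X.2.2.1 0) => X.2.1 i)
        (fun n => X.2.1 (n + X.2.2.1 0)) X.1
      rw [app_ofFn, List.length_ofFn] at h
      exact h.symm

/- STATEMENT 10: CIPRNG²_f is chaotic in the sense of Devaney on 𝒳_{N,𝒫} (for the product
   topology, each factor being discrete) if and only if 𝒢_{f,𝒫} is strongly connected. -/
theorem CIPRNG2_chaotic_iff_stronglyConnected (N : ℕ) (hN : 1 ≤ N)
    (f : (Fin N → Bool) → Fin N → Bool)
    (P : Finset ℕ) (hP : P.Nonempty) (hpos : ∀ p ∈ P, 0 < p) :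
    ((Dense {X : X2 N P | ∃ n > 0, (G2 N f P)^[n] X = X}) ∧
     (∀ U V : Set (X2 N P), IsOpen U → IsOpen V → U.Nonempty → V.Nonempty →
        ∃ k > 0, ((G2 N f P)^[k] '' U ∩ V).Nonempty))
    ↔ graphStronglyConnected N f P := by
  constructor
  · rintro ⟨-, htrans⟩ x y
    obtain ⟨p, hp⟩ := hP
    let w : (ℕ → Fin N) × {v : ℕ → ℕ // ∀ n, v n ∈ P} := (fun _ => ⟨0, hN⟩, ⟨fun _ => p, fun _ => hp⟩)
    have hopen : ∀ z : Fin N → Bool, IsOpen {X : X2 N P | X.1 = z} := fun z =>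
      (isOpen_discrete {z}).preimage continuous_fst
    obtain ⟨k, -, _, ⟨X, hX, rfl⟩, hY⟩ := htrans _ _ (hopen x) (hopen y) ⟨(x, w), rfl⟩ ⟨(y, w), rfl⟩
    have h := reach_iterate N f P k X
    rwa [show X.1 = x from hX, show ((G2 N f P)^[k] X).1 = y from hY] at h
  · intro hconn
    refine ⟨dense_iff_inter_open.mpr ?_, ?_⟩
    · rintro U hU ⟨X, hX⟩
      obtain ⟨L, hne, hL, hsub⟩ := exists_blocks_subset N P hpos U hU X hX
      obtain ⟨M, hM, hr⟩ := exists_path N f P hconn (run N f L X.1) X.1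
      have hLM : ∀ l ∈ L ++ M, l.length ∈ P := fun l hl =>
        (List.mem_append.mp hl).elim (hL l) (hM l)
      have hfl : (L ++ M).flatten ≠ [] := by
        obtain ⟨l, hl⟩ := List.exists_mem_of_ne_nil L hne
        intro h0
        have := List.flatten_eq_nil_iff.mp h0 l (List.mem_append_left _ hl)
        have := hpos _ (hL l hl)
        simp_all
      obtain ⟨u, hu, -⟩ := exists_cycle (L ++ M).flatten hfl
      obtain ⟨v, hv, hmem⟩ := exists_cycle ((L ++ M).map List.length) (by simp [hne])
      have hvP : ∀ n, v n ∈ P := fun n => by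
        obtain ⟨l, hl, he⟩ := List.mem_map.mp (hmem n)
        exact he ▸ hLM l hl
      refine ⟨(X.1, (u, ⟨v, hvP⟩)), hsub _ rfl ⟨app M.flatten u, ?_⟩
        ⟨app (M.map List.length) v, ?_⟩, (L ++ M).length, ?_, ?_⟩
      · rw [← app_append, ← List.flatten_append, hu]
      · rw [← app_append, ← List.map_append, hv]
      · exact List.length_pos_iff.mpr (by simp [hne])
      · rw [iterate_G2 N f P (L ++ M) u ⟨v, hvP⟩ _ hu.symm hv.symm]
        have : run N f (L ++ M) X.1 = X.1 := by
          rw [run, List.foldl_append]; exact hr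
        rw [this]
    · rintro U V hU - ⟨X, hX⟩ ⟨Y, hY⟩
      obtain ⟨L, hne, hL, hsub⟩ := exists_blocks_subset N P hpos U hU X hX
      obtain ⟨M, hM, hr⟩ := exists_path N f P hconn (run N f L X.1) Y.1
      have hvP : ∀ n, app ((L ++ M).map List.length) Y.2.2.1 n ∈ P := by
        refine app_mem (s := (· ∈ P)) (fun a ha => ?_) Y.2.2.2
        obtain ⟨l, hl, rfl⟩ := List.mem_map.mp ha
        exact (List.mem_append.mp hl).elim (hL l) (hM l)
      refine ⟨(L ++ M).length, List.length_pos_iff.mpr (by simp [hne]), Y,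
        ⟨(X.1, (app (L ++ M).flatten Y.2.1, ⟨_, hvP⟩)), hsub _ rfl ⟨app M.flatten Y.2.1, ?_⟩
          ⟨app (M.map List.length) Y.2.2.1, ?_⟩, ?_⟩, hY⟩
      · rw [← app_append, ← List.flatten_append]
      · rw [← app_append, ← List.map_append]
      · rw [iterate_G2 N f P (L ++ M) Y.2.1 Y.2.2 _ rfl rfl]
        have : run N f (L ++ M) X.1 = Y.1 := by
          rw [run, List.foldl_append]; exact hr
        rw [this]
end

section
/- The dynamical system underlying the XOR CIPRNG, namely the map Θ on (𝔹^N)^ℕ × 𝔹^N defined by Θ(S, x) = (σ(S), x ⊕ S^0), where ⊕ is the bitwise exclusive-or on 𝔹^N, is chaotic in the sense of Devaney for the product topology (each factor being discrete): its periodic points are dense and it is topologically transitive. -/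
/-!
Iterating, `Θ^k (S, x) = (σ^k S, x ⊕ S⁰ ⊕ ⋯ ⊕ S^{k-1})`. A neighbourhood of `(S, x)` contains every
`(S', x)` with `S'` agreeing with `S` on a long enough prefix `[0, m)` (`exists_prefix_subset`), and
the single term `S'^m` can be chosen so that the state after `m + 1` steps is any prescribed vector,
while the terms beyond `m` are the new sequence (`Theta_steer`). Aiming at a point of `V` gives
transitivity; taking `S'` to be `(m + 1)`-periodic and aiming at the initial state gives a periodic
point.
-/

/-- The dynamical system of the XOR CIPRNG : Θ(S,x) = (σ(S), x ⊕ S⁰) on (𝔹^N)^ℕ × 𝔹^N. -/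
def Theta (N : ℕ) (X : (ℕ → (Fin N → Bool)) × (Fin N → Bool)) :
    (ℕ → (Fin N → Bool)) × (Fin N → Bool) :=
  (fun n => X.1 (n + 1), fun i => xor (X.2 i) (X.1 0 i))

theorem Theta_iterate_fst (N : ℕ) (X : (ℕ → (Fin N → Bool)) × (Fin N → Bool)) (k n : ℕ) :
    ((Theta N)^[k] X).1 n = X.1 (n + k) := by
  induction k generalizing n with
  | zero => rfl
  | succ k ih =>
    rw [Function.iterate_succ_apply']
    change ((Theta N)^[k] X).1 (n + 1) = _
    rw [ih, show n + 1 + k = n + (k + 1) by omega]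

theorem Theta_iterate_succ_snd (N : ℕ) (X : (ℕ → (Fin N → Bool)) × (Fin N → Bool)) (k : ℕ) :
    ((Theta N)^[k + 1] X).2 = fun i => xor (((Theta N)^[k] X).2 i) (X.1 k i) := by
  rw [Function.iterate_succ_apply']
  change (fun i => xor (((Theta N)^[k] X).2 i) (((Theta N)^[k] X).1 0 i)) = _
  rw [Theta_iterate_fst, zero_add]

theorem Theta_iterate_snd_congr (N : ℕ) (S S' : ℕ → (Fin N → Bool)) (x : Fin N → Bool) (m : ℕ)
    (h : ∀ n < m, S' n = S n) :
    ((Theta N)^[m] (S', x)).2 = ((Theta N)^[m] (S, x)).2 := by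
  induction m with
  | zero => rfl
  | succ m ih =>
    rw [Theta_iterate_succ_snd, Theta_iterate_succ_snd, ih fun n hn => h n (by omega)]
    simp only [h m (by omega)]

/-- Steering: if `S'` follows `S` for `m` steps, then xors in the difference between the current
state and `y`, then continues as `T`, then `Θ^(m+1)` sends `(S', x)` to `(T, y)`. -/
theorem Theta_steer (N : ℕ) (S S' T : ℕ → (Fin N → Bool)) (x y : Fin N → Bool) (m : ℕ)
    (h : ∀ n < m, S' n = S n)
    (hm : S' m = fun i => xor (((Theta N)^[m] (S, x)).2 i) (y i))
    (hT : ∀ n, S' (n + (m + 1)) = T n) :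
    (Theta N)^[m + 1] (S', x) = (T, y) := by
  refine Prod.ext (funext fun n => ?_) ?_
  · rw [Theta_iterate_fst]
    exact hT n
  · rw [Theta_iterate_succ_snd, Theta_iterate_snd_congr N S S' x m h]
    simp [hm]

theorem exists_prefix_subset (N : ℕ) (U : Set ((ℕ → (Fin N → Bool)) × (Fin N → Bool)))
    (hU : IsOpen U) (S : ℕ → (Fin N → Bool)) (x : Fin N → Bool) (hX : (S, x) ∈ U) :
    ∃ m : ℕ, ∀ S' : ℕ → (Fin N → Bool), (∀ n < m, S' n = S n) → (S', x) ∈ U := by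
  have hslice : IsOpen {S' : ℕ → (Fin N → Bool) | (S', x) ∈ U} :=
    hU.preimage (Continuous.prodMk_left x)
  obtain ⟨I, u, hu, hsub⟩ := isOpen_pi_iff.1 hslice S hX
  refine ⟨I.sup id + 1, fun S' h => hsub fun i hi => ?_⟩
  rw [h i (Nat.lt_succ_of_le (Finset.le_sup (f := id) hi))]
  exact (hu i hi).2

/- STATEMENT 11: Θ is chaotic in the sense of Devaney for the product topology (each factor
   discrete): its periodic points are dense and it is topologically transitive. -/
theorem XOR_CIPRNG_chaotic (N : ℕ) (hN : 1 ≤ N) :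
    (Dense {X : (ℕ → (Fin N → Bool)) × (Fin N → Bool) | ∃ n > 0, (Theta N)^[n] X = X}) ∧
    (∀ U V : Set ((ℕ → (Fin N → Bool)) × (Fin N → Bool)),
      IsOpen U → IsOpen V → U.Nonempty → V.Nonempty →
        ∃ k > 0, ((Theta N)^[k] '' U ∩ V).Nonempty) := by
  constructor
  · rw [dense_iff_inter_open]
    rintro U hU ⟨⟨S, x⟩, hX⟩
    obtain ⟨m, hm⟩ := exists_prefix_subset N U hU S x hX
    let w : ℕ → (Fin N → Bool) := fun n =>
      if n < m then S n else fun i => xor (((Theta N)^[m] (S, x)).2 i) (x i)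
    let S' : ℕ → (Fin N → Bool) := fun n => w (n % (m + 1))
    have hS' : ∀ n < m, S' n = S n := fun n hn => by
      simp [S', w, Nat.mod_eq_of_lt (show n < m + 1 by omega), hn]
    refine ⟨(S', x), hm S' hS', m + 1, Nat.succ_pos m, Theta_steer N S S' S' x x m hS' ?_ ?_⟩
    · simp [S', w]
    · intro n
      simp [S']
  · rintro U V hU - ⟨⟨S, x⟩, hX⟩ ⟨⟨T, y⟩, hY⟩
    obtain ⟨m, hm⟩ := exists_prefix_subset N U hU S x hX
    let S' : ℕ → (Fin N → Bool) := fun n =>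
      if n < m then S n
      else if n = m then fun i => xor (((Theta N)^[m] (S, x)).2 i) (y i)
      else T (n - (m + 1))
    have hS' : ∀ n < m, S' n = S n := fun n hn => by simp [S', hn]
    refine ⟨m + 1, Nat.succ_pos m, (T, y), ⟨(S', x), hm S' hS', ?_⟩, hY⟩
    refine Theta_steer N S S' T x y m hS' (by simp [S']) fun n => ?_
    have h1 : ¬ n + (m + 1) < m := by omega
    have h2 : n + (m + 1) ≠ m := by omega
    simp only [S', if_neg h1, if_neg h2, Nat.add_sub_cancel]
end

section
/- Let g = ε_k ∘ F_{f₀}, where ε_k : 𝔹^N → 𝔹^N is a given keyed block cipher (a bijection of 𝔹^N) and f₀ is the vectorial Boolean negation. If the directed graph 𝒢_g is strongly connected, then the CBC dynamical system G_g on 𝔹^N × 𝒮_N, G_g(x, m) = ( g(m^0, x), σ(m) ), is strongly transitive for the product topology (each factor discrete): for every point X ∈ 𝔹^N × 𝒮_N, every neighborhood V of X, and every target internal state y ∈ 𝔹^N, there exist X' ∈ V and an integer t ≥ 1 such that the first component of G_g^t(X') equals y. Consequently G_g is chaotic in the sense of Devaney. -/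
/-!
The first component of the `t`-th iterate of `GCBC` depends only on the initial state and on the
first `t` blocks (`GCBC_iterate_fst_congr`), while the second component is just shifted `t` times.
Hence messages can be spliced: keep the first `n` blocks of a given message, which pins down a basic
neighbourhood, then read the labels along a path of the graph leading from the state reached to any
prescribed state `y`, then continue with any prescribed message. This is `GCBC_splice`: every
cylinder contains a point some iterate of which is *exactly* a prescribed point. Strong and
topological transitivity are immediate. For density of periodic points, steer back to the initial
state and repeat the finite word so obtained forever.
-/

/-- The j-th bit (counting from the left, j = 1..N rendered as j : Fin N) of the block
    m ∈ ⟦0, 2^N − 1⟧ in the binary numeral system. -/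
def blockBit (N : ℕ) (m : Fin (2 ^ N)) (j : Fin N) : Bool :=
  Nat.testBit m.val (N - 1 - j.val)

/-- The CBC update function F_f(x,m) = (x_j·m_j + f(x)_j·¬m_j)_{j=1..N} : the j-th bit of x
    is replaced by f(x)_j exactly when the j-th bit of the block m is 1. -/
def Fcbc (N : ℕ) (f : (Fin N → Bool) → Fin N → Bool)
    (x : Fin N → Bool) (m : Fin (2 ^ N)) : Fin N → Bool :=
  fun j => if blockBit N m j then f x j else x j

/-- g(m,x) = ε_k(F_{f₀}(x,m)) : the CBC one-step transition for the keyed block cipher ε_k. -/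
def gCBC (N : ℕ) (ε : (Fin N → Bool) → Fin N → Bool)
    (m : Fin (2 ^ N)) (x : Fin N → Bool) : Fin N → Bool :=
  ε (Fcbc N (negAll N) x m)

/-- The CBC mode of operation as a dynamical system on 𝔹^N × 𝒮_N,
    G_g(x,m) = (g(m⁰,x), σ(m)). -/
def GCBC (N : ℕ) (ε : (Fin N → Bool) → Fin N → Bool)
    (X : (Fin N → Bool) × (ℕ → Fin (2 ^ N))) : (Fin N → Bool) × (ℕ → Fin (2 ^ N)) :=
  (gCBC N ε (X.2 0) X.1, fun n => X.2 (n + 1))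

theorem GCBC_iterate_snd (N : ℕ) (ε : (Fin N → Bool) → Fin N → Bool) (t : ℕ)
    (X : (Fin N → Bool) × (ℕ → Fin (2 ^ N))) :
    ((GCBC N ε)^[t] X).2 = fun i => X.2 (i + t) := by
  induction t with
  | zero => rfl
  | succ t ih =>
    rw [Function.iterate_succ_apply']
    funext i
    simp only [GCBC, ih]
    rw [Nat.add_right_comm, Nat.add_assoc]

/-- The state reached after `t` steps is determined by the initial state and the first `t` blocks. -/
theorem GCBC_iterate_fst_congr (N : ℕ) (ε : (Fin N → Bool) → Fin N → Bool) (t : ℕ)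
    (x : Fin N → Bool) (a b : ℕ → Fin (2 ^ N)) (h : ∀ i < t, a i = b i) :
    ((GCBC N ε)^[t] (x, a)).1 = ((GCBC N ε)^[t] (x, b)).1 := by
  induction t with
  | zero => rfl
  | succ t ih =>
    rw [Function.iterate_succ_apply', Function.iterate_succ_apply']
    have h1 := ih fun i hi => h i (by omega)
    simp only [GCBC, GCBC_iterate_snd, h1, Nat.zero_add, h t (Nat.lt_succ_self t)]

/-- A path in the graph is followed by the system when the message consists of its labels. -/
theorem GCBC_exists_of_path (N : ℕ) (ε : (Fin N → Bool) → Fin N → Bool) (x y : Fin N → Bool)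
    (h : Relation.ReflTransGen (fun a b => ∃ m : Fin (2 ^ N), gCBC N ε m a = b) x y) :
    ∃ (t : ℕ) (w : ℕ → Fin (2 ^ N)), ((GCBC N ε)^[t] (x, w)).1 = y := by
  induction h using Relation.ReflTransGen.head_induction_on with
  | refl => exact ⟨0, fun _ => ⟨0, by positivity⟩, rfl⟩
  | head hab _ ih =>
    obtain ⟨m, rfl⟩ := hab
    obtain ⟨t, w, hw⟩ := ih
    refine ⟨t + 1, fun i => Nat.casesOn i m w, ?_⟩
    rw [Function.iterate_succ_apply]
    exact hw

/-- Every cylinder (initial state `x`, first `n` blocks those of `s`) contains a point that is sent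
exactly to the prescribed point `(y, s')`, after at least `n` and at least one step. -/
theorem GCBC_splice (N : ℕ) (ε : (Fin N → Bool) → Fin N → Bool)
    (hconn : ∀ x y : Fin N → Bool,
      Relation.ReflTransGen (fun a b => ∃ m : Fin (2 ^ N), gCBC N ε m a = b) x y)
    (x y : Fin N → Bool) (s s' : ℕ → Fin (2 ^ N)) (n : ℕ) :
    ∃ t > 0, n ≤ t ∧ ∃ a : ℕ → Fin (2 ^ N), (∀ i < n, a i = s i) ∧
      (GCBC N ε)^[t] (x, a) = (y, s') := by
  obtain ⟨k, w, hw⟩ := GCBC_exists_of_path N ε _ y (hconn ((GCBC N ε)^[n + 1] (x, s)).1 y)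
  -- Following `s` for `n + 1` blocks rather than `n` makes the total time positive.
  let a : ℕ → Fin (2 ^ N) := fun i =>
    if i < n + 1 then s i else if i < k + (n + 1) then w (i - (n + 1)) else s' (i - (k + (n + 1)))
  refine ⟨k + (n + 1), by omega, by omega, a, fun i hi => if_pos (by omega), Prod.ext ?_ ?_⟩
  · have hs : ((GCBC N ε)^[n + 1] (x, a)).1 = ((GCBC N ε)^[n + 1] (x, s)).1 :=
      GCBC_iterate_fst_congr N ε _ x a s fun i hi => if_pos hi
    have hX : (GCBC N ε)^[n + 1] (x, a) =
        (((GCBC N ε)^[n + 1] (x, s)).1, fun i => a (i + (n + 1))) :=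
      Prod.ext hs (GCBC_iterate_snd N ε _ _)
    rw [Function.iterate_add_apply, hX, ← hw]
    refine GCBC_iterate_fst_congr N ε k _ _ _ fun i hi => ?_
    have h1 : ¬ i + (n + 1) < n + 1 := by omega
    have h2 : i + (n + 1) < k + (n + 1) := by omega
    simp only [a, if_neg h1, if_pos h2, Nat.add_sub_cancel]
  · rw [GCBC_iterate_snd]
    funext i
    have h1 : ¬ i + (k + (n + 1)) < n + 1 := by omega
    have h2 : ¬ i + (k + (n + 1)) < k + (n + 1) := by omega
    simp only [a, if_neg h1, if_neg h2, Nat.add_sub_cancel]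

/-- Cylinders form a neighbourhood basis of the product topology. -/
theorem exists_cylinder_subset (N : ℕ) (x : Fin N → Bool) (s : ℕ → Fin (2 ^ N))
    (V : Set ((Fin N → Bool) × (ℕ → Fin (2 ^ N)))) (hV : V ∈ nhds (x, s)) :
    ∃ n : ℕ, ∀ a : ℕ → Fin (2 ^ N), (∀ i < n, a i = s i) → (x, a) ∈ V := by
  obtain ⟨A, hA, B, hB, hAB⟩ := mem_nhds_prod_iff.1 hV
  rw [nhds_pi, Filter.mem_pi] at hB
  obtain ⟨I, hI, u, hu, hIu⟩ := hB
  obtain ⟨n, hn⟩ := hI.bddAbove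
  refine ⟨n + 1, fun a ha => hAB ⟨mem_of_mem_nhds hA, hIu fun i hi => ?_⟩⟩
  change a i ∈ u i
  rw [ha i (Nat.lt_succ_of_le (hn hi))]
  exact mem_of_mem_nhds (hu i)

/- STATEMENT 15: if the graph 𝒢_g (vertices 𝔹^N, an edge labelled m from x to x̌ iff
   g(m,x) = x̌) is strongly connected, then the CBC dynamical system G_g is strongly
   transitive for the product topology (each factor discrete), and consequently G_g is
   chaotic in the sense of Devaney (dense periodic points and topological transitivity). -/
theorem CBC_strongly_transitive_of_stronglyConnected (N : ℕ) (hN : 1 ≤ N)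
    (ε : (Fin N → Bool) → Fin N → Bool) (hε : Function.Bijective ε)
    (hconn : ∀ x y : Fin N → Bool,
      Relation.ReflTransGen (fun a b => ∃ m : Fin (2 ^ N), gCBC N ε m a = b) x y) :
    (∀ X : (Fin N → Bool) × (ℕ → Fin (2 ^ N)), ∀ V ∈ nhds X, ∀ y : Fin N → Bool,
      ∃ X' ∈ V, ∃ t ≥ 1, ((GCBC N ε)^[t] X').1 = y) ∧
    ((Dense {X : (Fin N → Bool) × (ℕ → Fin (2 ^ N)) | ∃ n > 0, (GCBC N ε)^[n] X = X}) ∧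
     (∀ U V : Set ((Fin N → Bool) × (ℕ → Fin (2 ^ N))),
        IsOpen U → IsOpen V → U.Nonempty → V.Nonempty →
          ∃ k > 0, ((GCBC N ε)^[k] '' U ∩ V).Nonempty)) := by
  refine ⟨?_, ?_, ?_⟩
  · rintro ⟨x, s⟩ V hV y
    obtain ⟨n, hn⟩ := exists_cylinder_subset N x s V hV
    obtain ⟨t, ht, -, a, ha, hat⟩ := GCBC_splice N ε hconn x y s s n
    exact ⟨(x, a), hn a ha, t, ht, by rw [hat]⟩
  · rintro ⟨x, s⟩
    refine mem_closure_iff_nhds.2 fun V hV => ?_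
    obtain ⟨n, hn⟩ := exists_cylinder_subset N x s V hV
    obtain ⟨t, ht, hnt, a, ha, hat⟩ := GCBC_splice N ε hconn x x s s n
    -- The first `t` blocks of `a` lead from `x` back to `x`; repeat them periodically.
    refine ⟨(x, fun i => a (i % t)), hn _ fun i hi => ?_, t, ht, Prod.ext ?_ ?_⟩
    · rw [Nat.mod_eq_of_lt (lt_of_lt_of_le hi hnt), ha i hi]
    · rw [GCBC_iterate_fst_congr N ε t x _ a fun i hi => by rw [Nat.mod_eq_of_lt hi], hat]
    · rw [GCBC_iterate_snd]
      funext i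
      simp only [Nat.add_mod_right]
  · rintro U V hU hV ⟨⟨x, s⟩, hxU⟩ ⟨⟨y, s'⟩, hyV⟩
    obtain ⟨n, hn⟩ := exists_cylinder_subset N x s U (hU.mem_nhds hxU)
    obtain ⟨t, ht, -, a, ha, hat⟩ := GCBC_splice N ε hconn x y s s' n
    exact ⟨t, ht, (y, s'), ⟨(x, a), hn a ha, hat⟩, hyV⟩
end
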